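/- arXiv:2605.13882 — 3 statements merged into one kernel-verified Lean document; each statement's English description precedes it below -/
import Mathlib

section
/- The integral R_C(1, 1/2) = ∫_0^∞ x·cos(πx/2)/(exp(2π√x) − 1) dx converges and equals (13 − 4π)/(8π²). -/
open MeasureTheory Real Set

open Complex Filter Topology intervalIntegral FourierTransform in
lemma rc_shift (F : ℂ → ℂ) (hF : Differentiable ℂ F)
    (h0 : IntegrableOn (fun t : ℝ => F t) (Ioi 0))
    (h2 : IntegrableOn (fun t : ℝ => F (t + 2 * I)) (Ioi 0))
    (b : ℝ → ℝ) (hb : Tendsto b atTop (𝓝 0))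
    (hv : ∀ R : ℝ, 0 ≤ R → ∀ y : ℝ, 0 ≤ y → y ≤ 2 → ‖F (R + y * I)‖ ≤ b R) :
    ∫ t in Ioi (0:ℝ), F t = (∫ t in Ioi (0:ℝ), F (t + 2 * I)) + I * ∫ y in (0:ℝ)..2, F (y * I) := by
  have key : ∀ R : ℝ, (∫ t in (0:ℝ)..R, F t) - (∫ t in (0:ℝ)..R, F (t + 2 * I))
      + I * (∫ y in (0:ℝ)..2, F (R + y * I)) = I * ∫ y in (0:ℝ)..2, F (y * I) := by
    intro R
    have := Complex.integral_boundary_rect_eq_zero_of_differentiableOn F 0 (R + 2 * I)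
      hF.differentiableOn
    simp at this
    linear_combination this
  have hlim : Tendsto (fun R : ℝ => ∫ y in (0:ℝ)..2, F (R + y * I)) atTop (𝓝 0) := by
    have h3 : Tendsto (fun R => b R * |2 - (0:ℝ)|) atTop (𝓝 0) := by simpa using hb.mul_const |2 - (0:ℝ)|
    refine squeeze_zero_norm' ?_ h3
    filter_upwards [eventually_ge_atTop 0] with R hR
    apply intervalIntegral.norm_integral_le_of_norm_le_const
    intro y hy
    rw [uIoc_of_le (by norm_num)] at hy
    exact hv R hR y hy.1.le hy.2
  have l1 := intervalIntegral_tendsto_integral_Ioi 0 h0 tendsto_id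
  have l2 := intervalIntegral_tendsto_integral_Ioi 0 h2 tendsto_id
  have l3 := (l1.sub l2).add (hlim.const_mul I)
  have l4 := tendsto_nhds_unique (l3.congr key) tendsto_const_nhds
  linear_combination l4

lemma rc_mom (n : ℕ) {a : ℝ} (ha : 0 < a) :
    IntegrableOn (fun t : ℝ => t ^ n * Real.exp (-a * t)) (Ioi 0) ∧
    ∫ t in Ioi (0:ℝ), t ^ n * Real.exp (-a * t) = n.factorial / a ^ (n + 1) := by
  constructor
  · have := integrableOn_rpow_mul_exp_neg_mul_rpow (p := 1) (s := n) (b := a)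
      (by have : (0:ℝ) ≤ n := n.cast_nonneg
          linarith) one_pos ha
    simpa using this
  · have := Real.integral_rpow_mul_exp_neg_mul_Ioi (a := n + 1) (r := a) (by positivity) ha
    simp only [add_sub_cancel_right, Real.rpow_natCast, Real.Gamma_nat_eq_factorial] at this
    simp only [neg_mul]
    rw [this]
    rw [show ((n:ℝ) + 1) = ((n + 1 : ℕ) : ℝ) by push_cast; ring, Real.rpow_natCast]
    simp [div_eq_inv_mul]

noncomputable def rcE (k : ℕ) (z : ℂ) : ℂ :=
  Complex.exp (Complex.I * π * z ^ 2 / 2 - 2 * π * k * z)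

noncomputable def rcP (z : ℂ) : ℂ := Complex.I / 8 * z ^ 2 * (z - 2 * Complex.I) ^ 2

noncomputable def rcW (y : ℝ) : ℂ :=
  (y : ℂ) ^ 2 * (2 - y) ^ 2 * Complex.exp (-(Complex.I * π * y ^ 2 / 2))

noncomputable def rcC (n : ℤ) : ℂ :=
  ∫ y in (0:ℝ)..2, rcW y * Complex.exp (-(2 * π * Complex.I * n * y))

lemma rcE_diff (k : ℕ) : Differentiable ℂ (rcE k) := by
  unfold rcE; fun_prop

lemma rcP_diff : Differentiable ℂ rcP := by
  unfold rcP; fun_prop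

lemma rcE_norm (k : ℕ) (x y : ℝ) :
    ‖rcE k (x + y * Complex.I)‖ = Real.exp (-(π * x * y) - 2 * π * k * x) := by
  rw [rcE, Complex.norm_exp]
  congr 1
  have : Complex.I * π * ((x:ℂ) + y * Complex.I) ^ 2 / 2 - 2 * π * k * (x + y * Complex.I)
    = ((-(π * x * y) - 2 * π * k * x : ℝ) : ℂ) + ((π * (x^2-y^2)/2 - 2 * π * k * y : ℝ) : ℂ) * Complex.I := by
    push_cast
    linear_combination (π * x * y + Complex.I * π * y^2/2: ℂ) * Complex.I_sq
  rw [this, Complex.add_re, Complex.ofReal_re, Complex.re_ofReal_mul, Complex.I_re]; ring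

lemma rcE_norm_real (k : ℕ) (x : ℝ) :
    ‖rcE k x‖ = Real.exp (-(2 * π * k) * x) := by
  have := rcE_norm k x 0
  simp at this
  rw [this]; congr 1; ring

lemma rcP_norm (x y : ℝ) (hx : 0 ≤ x) (hy : 0 ≤ y) (hy2 : y ≤ 2) :
    ‖rcP (x + y * Complex.I)‖ ≤ (x + 2) ^ 4 := by
  have h1 : ‖(x + y * Complex.I : ℂ)‖ ≤ x + 2 := by
    refine (norm_add_le _ _).trans ?_
    simp [abs_of_nonneg hx, abs_of_nonneg hy, hy2]
  have h2 : ‖(x + y * Complex.I - 2 * Complex.I : ℂ)‖ ≤ x + 2 := by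
    have : (x + y * Complex.I - 2 * Complex.I : ℂ) = (x:ℂ) + ((y - 2 : ℝ) : ℂ) * Complex.I := by
      push_cast; ring
    rw [this]
    refine (norm_add_le _ _).trans ?_
    rw [norm_mul, Complex.norm_real, Complex.norm_real, Complex.norm_I, Real.norm_eq_abs,
      Real.norm_eq_abs, abs_of_nonneg hx, abs_of_nonpos (by linarith)]
    linarith
  rw [rcP]
  simp only [norm_mul, norm_div, norm_pow, Complex.norm_I]
  have : (1 / ‖(8:ℂ)‖) ≤ 1 := by norm_num
  calc _ ≤ 1 * (x+2)^2 * (x+2)^2 := by gcongr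
    _ = _ := by ring

lemma rcP_norm_real (x : ℝ) : ‖rcP x‖ = (x ^ 4 + 4 * x ^ 2) / 8 := by
  rw [rcP]
  simp only [norm_mul, norm_div, norm_pow, Complex.norm_I]
  have : ‖(x:ℂ) - 2 * Complex.I‖ ^ 2 = x ^ 2 + 4 := by
    rw [Complex.sq_norm, Complex.normSq_apply]; simp; ring
  rw [this]
  simp; ring

lemma rcP_diffeq (z : ℂ) : rcP z - rcP (z + 2 * Complex.I) = z ^ 3 := by
  unfold rcP
  have h3 : Complex.I ^ 3 = - Complex.I := by rw [pow_succ, Complex.I_sq]; ring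
  linear_combination (-z^3 - z^2 * Complex.I * 0) * Complex.I_sq

lemma rcE_shift (k : ℕ) (z : ℂ) : rcE k (z + 2 * Complex.I) = rcE (k + 1) z := by
  unfold rcE
  have : Complex.I * π * (z + 2 * Complex.I) ^ 2 / 2 - 2 * π * k * (z + 2 * Complex.I)
    = Complex.I * π * z ^ 2 / 2 - 2 * π * (k + 1 : ℕ) * z + ((-1 - 2 * k : ℤ) : ℂ) * (2 * π * Complex.I) := by
    push_cast
    linear_combination (2 * π * z + 2 * π * Complex.I : ℂ) * Complex.I_sq
  rw [this, Complex.exp_add, Complex.exp_int_mul_two_pi_mul_I, mul_one]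

/-- horizontal integrability -/
lemma rc_int (Q : ℂ → ℂ) (hQ : Continuous Q) (C : ℝ)
    (hb : ∀ x : ℝ, 0 ≤ x → ‖Q x‖ ≤ C * (x + 2) ^ 4) (k : ℕ) (hk : 1 ≤ k) :
    IntegrableOn (fun t : ℝ => Q t * rcE k t) (Ioi 0) := by
  have hk' : (0:ℝ) < 2 * π * k := by have : (0:ℝ) < k := by exact_mod_cast hk
                                     positivity
  have m := fun n => (rc_mom n hk').1
  have hg : IntegrableOn (fun t : ℝ => C * (t + 2) ^ 4 * Real.exp (-(2 * π * k) * t)) (Ioi 0) := by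
    have := ((((m 4).add ((m 3).const_mul 8)).add ((m 2).const_mul 24)).add
      ((m 1).const_mul 32)).add ((m 0).const_mul 16)
    refine Integrable.congr (this.const_mul C) (ae_of_all _ fun t => ?_)
    simp only [Pi.add_apply]; ring
  refine Integrable.mono' hg ?_ ?_
  · refine Continuous.aestronglyMeasurable ?_
    have := (rcE_diff k).continuous
    fun_prop
  · refine (ae_restrict_mem measurableSet_Ioi).mono fun t ht => ?_
    rw [norm_mul, rcE_norm_real]
    gcongr
    exact hb t (le_of_lt ht)

noncomputable def rcA (k : ℕ) : ℂ := ∫ t in Ioi (0:ℝ), 2 * (t:ℂ) ^ 3 * rcE k t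
noncomputable def rcB (k : ℕ) : ℂ := ∫ t in Ioi (0:ℝ), rcP t * rcE k t
noncomputable def rcD : ℂ := ∫ t in Ioi (0:ℝ), rcP (t + 2 * Complex.I) * rcE 1 t

lemma rc_intP (k : ℕ) (hk : 1 ≤ k) : IntegrableOn (fun t : ℝ => rcP t * rcE k t) (Ioi 0) := by
  refine rc_int rcP rcP_diff.continuous 1 (fun x hx => ?_) k hk
  have := rcP_norm x 0 hx le_rfl (by norm_num)
  simpa using this

lemma rc_intP2 (k : ℕ) (hk : 1 ≤ k) :
    IntegrableOn (fun t : ℝ => rcP (t + 2 * Complex.I) * rcE k t) (Ioi 0) := by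
  refine rc_int (fun z => rcP (z + 2 * Complex.I)) ?_ 1 (fun x hx => ?_) k hk
  · have := rcP_diff.continuous
    fun_prop
  · have := rcP_norm x 2 hx (by norm_num) le_rfl
    simpa using this

lemma rc_int3 (k : ℕ) (hk : 1 ≤ k) :
    IntegrableOn (fun t : ℝ => 2 * (t:ℂ) ^ 3 * rcE k t) (Ioi 0) := by
  refine rc_int (fun z => 2 * z ^ 3) (by fun_prop) 1 (fun x hx => ?_) k hk
  simp [abs_of_nonneg hx]
  nlinarith [pow_nonneg hx 2, pow_nonneg hx 3, pow_nonneg hx 4]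

lemma rcA_eq (k : ℕ) (hk : 1 ≤ k) :
    rcA k = 2 * rcB k - 2 * ∫ t in Ioi (0:ℝ), rcP (t + 2 * Complex.I) * rcE k t := by
  unfold rcA rcB
  rw [← mul_sub, ← integral_sub (rc_intP k hk) (rc_intP2 k hk), ← integral_const_mul]
  congr 1; ext t
  rw [← sub_mul, rcP_diffeq]; ring

open Filter Topology in
lemma rc_tail : Tendsto (fun R : ℝ => Real.exp 2 * ((R + 2) ^ 4 * Real.exp (-(R + 2)))) atTop (𝓝 0) := by
  have := (Real.tendsto_pow_mul_exp_neg_atTop_nhds_zero 4).comp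
    (tendsto_atTop_add_const_right atTop (2:ℝ) tendsto_id)
  simpa using this.const_mul (Real.exp 2)

lemma rcE_le (k : ℕ) (hk : 1 ≤ k) (x y : ℝ) (hx : 0 ≤ x) (hy : 0 ≤ y) :
    ‖rcE k (x + y * Complex.I)‖ ≤ Real.exp 2 * Real.exp (-(x + 2)) := by
  rw [rcE_norm, ← Real.exp_add]
  apply Real.exp_le_exp.2
  have h1 : 0 ≤ π * x * y := by positivity
  have h2 : (1:ℝ) ≤ k := by exact_mod_cast hk
  have h3 : (1:ℝ) * 1 ≤ (2 * π) * k := by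
    apply mul_le_mul _ h2 (by norm_num) (by positivity)
    linarith [Real.pi_gt_three]
  nlinarith

lemma rcC_eq (k : ℕ) : rcC k = -8 * (Complex.I * ∫ y in (0:ℝ)..2, rcP (y * Complex.I) * rcE k (y * Complex.I)) := by
  rw [rcC, ← intervalIntegral.integral_const_mul, ← intervalIntegral.integral_const_mul]
  congr 1; ext y
  rw [rcW, rcP, rcE, mul_assoc, ← Complex.exp_add]
  have e : Complex.I * π * (y * Complex.I) ^ 2 / 2 - 2 * π * k * (y * Complex.I) =
    -(Complex.I * π * y ^ 2 / 2) + -(2 * π * Complex.I * (k : ℤ) * y) := by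
    push_cast
    linear_combination (Complex.I * π * y^2/2 : ℂ) * Complex.I_sq
  rw [e]
  have : (y:ℂ)^2 * (2 - y)^2 = -8 * (Complex.I * (Complex.I / 8 * (y * Complex.I) ^ 2 * (y * Complex.I - 2 * Complex.I) ^ 2)) := by
    have : -8 * (Complex.I * (Complex.I / 8 * (y * Complex.I) ^ 2 * (y * Complex.I - 2 * Complex.I) ^ 2))
      = -(Complex.I^2)^3 * ((y:ℂ)^2 * (2 - y)^2) := by ring
    rw [this, Complex.I_sq]; ring
  rw [← mul_assoc, this]; ring

lemma rcB_shift (k : ℕ) (hk : 1 ≤ k) :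
    ∫ t in Ioi (0:ℝ), rcP (t + 2 * Complex.I) * rcE (k + 1) t = rcB k + rcC k / 8 := by
  have h := rc_shift (fun z => rcP z * rcE k z) (rcP_diff.mul (rcE_diff k)) (rc_intP k hk)
    (by simp only [rcE_shift]
        exact rc_intP2 (k + 1) (by omega))
    _ rc_tail (by
      intro R hR y hy hy2
      rw [norm_mul]
      calc _ ≤ (R + 2) ^ 4 * (Real.exp 2 * Real.exp (-(R + 2))) := by
            gcongr
            · exact rcP_norm R y hR hy hy2
            · exact rcE_le k hk R y hR hy
        _ = _ := by ring)
  simp only [rcE_shift] at h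
  rw [rcB, h]
  rw [rcC_eq]; ring

lemma rcA_rec (k : ℕ) (hk : 1 ≤ k) : rcA (k + 1) = 2 * rcB (k + 1) - 2 * rcB k - rcC k / 4 := by
  rw [rcA_eq (k + 1) (by omega), rcB_shift k hk]; ring

lemma rcA_one : rcA 1 = 2 * rcB 1 - 2 * rcD := rcA_eq 1 le_rfl

lemma rc_summ (m : ℕ) (hm : 1 ≤ m) :
    Summable (fun n : ℕ => (m.factorial : ℝ) / (2 * π * (n + 1 : ℕ)) ^ (m + 1)) := by
  have h := (summable_nat_add_iff (f := fun n : ℕ => 1 / (n:ℝ) ^ (m + 1)) 1).2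
    (Real.summable_one_div_nat_pow.2 (by omega))
  refine (h.mul_left ((m.factorial : ℝ) / (2 * π) ^ (m + 1))).congr fun n => ?_
  field_simp
  rw [mul_pow, mul_pow]

lemma rcA_norm_int (k : ℕ) (hk : 1 ≤ k) : ∫ t in Ioi (0:ℝ), ‖2 * (t:ℂ) ^ 3 * rcE k t‖ =
    2 * ((Nat.factorial 3 : ℝ) / (2 * π * k) ^ (3 + 1)) := by
  have hk' : (0:ℝ) < 2 * π * k := by have : (0:ℝ) < k := by exact_mod_cast hk
                                     positivity
  rw [← (rc_mom 3 hk').2, ← integral_const_mul]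
  refine setIntegral_congr_fun measurableSet_Ioi fun t ht => ?_
  have : (0:ℝ) < t := ht
  simp only [norm_mul, rcE_norm_real, norm_pow, Complex.norm_real, Real.norm_eq_abs, abs_of_pos this]
  simp; ring

lemma rcA_normsum : Summable (fun n : ℕ => ∫ t in Ioi (0:ℝ), ‖2 * (t:ℂ) ^ 3 * rcE (n + 1) t‖) := by
  refine ((rc_summ 3 (by norm_num)).mul_left 2).congr fun n => ?_
  rw [rcA_norm_int (n + 1) (by omega)]

lemma rcA_summ : Summable (fun n : ℕ => rcA (n + 1)) := by
  refine Summable.of_norm_bounded rcA_normsum fun n => ?_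
  exact norm_integral_le_integral_norm _

lemma rcB_summ : Summable (fun n : ℕ => rcB (n + 1)) := by
  refine Summable.of_norm_bounded (((rc_summ 4 (by norm_num)).mul_left (1/8)).add
    ((rc_summ 2 (by norm_num)).mul_left (1/2))) fun n => ?_
  refine (norm_integral_le_integral_norm _).trans (le_of_eq ?_)
  have hk' : (0:ℝ) < 2 * π * (n + 1 : ℕ) := by positivity
  rw [← (rc_mom 4 hk').2, ← (rc_mom 2 hk').2, ← integral_const_mul, ← integral_const_mul,
    ← integral_add ((rc_mom 4 hk').1.const_mul _) ((rc_mom 2 hk').1.const_mul _)]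
  congr 1; ext t
  rw [norm_mul, rcE_norm_real, rcP_norm_real]; ring

lemma rcC_summ : Summable (fun n : ℕ => rcC (n + 1 : ℕ)) := by
  have hA := (summable_nat_add_iff (f := fun n : ℕ => rcA (n + 1)) 1).2 rcA_summ
  have hB := (summable_nat_add_iff (f := fun n : ℕ => rcB (n + 1)) 1).2 rcB_summ
  refine (((hB.mul_left 8).sub (rcB_summ.mul_left 8)).sub (hA.mul_left 4)).congr fun n => ?_
  rw [rcA_rec (n + 1) (by omega)]; ring

lemma rcA_tsum : ∑' n : ℕ, rcA (n + 1) = -2 * rcD - (∑' n : ℕ, rcC (n + 1 : ℕ)) / 4 := by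
  have hB := (summable_nat_add_iff (f := fun n : ℕ => rcB (n + 1)) 1).2 rcB_summ
  have e1 := rcA_summ.tsum_eq_zero_add
  have e2 := rcB_summ.tsum_eq_zero_add
  have e3 : ∑' n : ℕ, rcA (n + 1 + 1) = 2 * ∑' n : ℕ, rcB (n + 1 + 1) - 2 * ∑' n : ℕ, rcB (n + 1)
      - (∑' n : ℕ, rcC (n + 1 : ℕ)) / 4 := by
    rw [← tsum_mul_left, ← tsum_mul_left, ← tsum_div_const,
      ← (hB.mul_left 2).tsum_sub (rcB_summ.mul_left 2),
      ← ((hB.mul_left 2).sub (rcB_summ.mul_left 2)).tsum_sub (rcC_summ.div_const 4)]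
    congr 1; ext n
    rw [rcA_rec (n + 1) (by omega)]
  rw [e1, e3, e2]
  simp only [zero_add, rcA_one]
  ring

lemma rcW_cont : Continuous rcW := by
  unfold rcW; fun_prop

lemma rcC_symm (n : ℤ) : rcC (-(n + 1)) = rcC n := by
  unfold rcC
  have h := intervalIntegral.integral_comp_sub_left (a := 0) (b := 2)
    (fun y : ℝ => rcW y * Complex.exp (-(2 * π * Complex.I * n * y))) 2
  simp only [sub_self, sub_zero] at h
  rw [← h]
  congr 1; ext y
  unfold rcW
  rw [mul_assoc _ (Complex.exp _) (Complex.exp _), ← Complex.exp_add,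
    mul_assoc _ (Complex.exp _) (Complex.exp _), ← Complex.exp_add]
  have e : -(Complex.I * π * ((2 - y : ℝ) : ℂ) ^ 2 / 2) + -(2 * π * Complex.I * n * ((2 - y : ℝ) : ℂ))
      = -(Complex.I * π * y ^ 2 / 2) + -(2 * π * Complex.I * ((-(n + 1) : ℤ) : ℂ) * y)
        + ((-1 - 2 * n : ℤ) : ℂ) * (2 * π * Complex.I) := by
    push_cast; ring
  rw [e, Complex.exp_add _ (_ * (2 * π * Complex.I)), Complex.exp_int_mul_two_pi_mul_I]
  push_cast; ring

open FourierTransform Filter Asymptotics in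
lemma rc_poisson (hs : Summable rcC) : ∑' n : ℤ, rcC n = -Complex.I := by
  set f : ℝ → ℂ := fun y => rcW (max 0 (min y 2)) with hf
  have hc : Continuous f := by
    have := rcW_cont
    fun_prop
  have hz : ∀ y, y ∉ Ioc (0:ℝ) 2 → f y = 0 := by
    intro y hy
    rcases le_or_gt y 0 with h | h
    · have : max 0 (min y 2) = 0 := by
        apply max_eq_left; exact (min_le_left _ _).trans h
      simp [hf, this, rcW]
    · have h2 : 2 ≤ y := by
        by_contra hh
        exact hy ⟨h, by linarith⟩
      simp [hf, rcW, min_eq_right h2]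
  have hin : ∀ y ∈ Ioc (0:ℝ) 2, f y = rcW y := by
    intro y hy
    simp [hf, min_eq_left hy.2, max_eq_right hy.1.le]
  have hF : ∀ n : ℤ, 𝓕 f n = rcC n := by
    intro n
    rw [Real.fourier_real_eq_integral_exp_smul, rcC,
      intervalIntegral.integral_of_le (by norm_num),
      ← setIntegral_eq_integral_of_forall_compl_eq_zero (s := Ioc (0:ℝ) 2)]
    · refine setIntegral_congr_fun measurableSet_Ioc fun y hy => ?_
      simp only [smul_eq_mul]
      rw [hin y hy, mul_comm]
      congr 2
      push_cast; ring
    · intro y hy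
      simp [hz y hy]
  have hO : f =O[cocompact ℝ] fun x : ℝ => |x| ^ (-(2:ℝ)) := by
    have : f =ᶠ[cocompact ℝ] fun _ => 0 := by
      filter_upwards [(isCompact_Icc (a := (0:ℝ)) (b := 2)).compl_mem_cocompact] with y hy
      exact hz y fun h => hy ⟨h.1.le, h.2⟩
    exact this.trans_isBigO (isBigO_zero _ _)
  have h := Real.tsum_eq_tsum_fourier_of_rpow_decay_of_summable hc one_lt_two hO
    (by simpa only [hF] using hs) 0
  simp only [hF] at h
  rw [tsum_eq_single 1] at h
  · have e : f (0 + ((1:ℤ):ℝ)) = -Complex.I := by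
      rw [hin _ (by norm_num)]
      simp only [rcW]
      have : -(Complex.I * π * (((0 + ((1:ℤ):ℝ) : ℝ)) : ℂ) ^ 2 / 2) = -(π / 2 * Complex.I) := by
        push_cast; ring
      rw [this, Complex.exp_neg, Complex.exp_pi_div_two_mul_I, Complex.inv_I]
      norm_num
    rw [e] at h
    rw [h]
    congr 1; ext n
    simp
  · intro n hn
    rcases lt_or_gt_of_ne hn with h1 | h1
    · apply hz
      intro h2
      have : (n:ℝ) ≤ 0 := by exact_mod_cast (by omega : n ≤ 0)
      have := h2.1
      linarith
    · rcases eq_or_lt_of_le (show 2 ≤ n by omega) with h3 | h3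
      · simp [hf, ← h3, rcW]
      · apply hz
        intro h2
        have : (2:ℝ) < n := by exact_mod_cast h3
        have := h2.2
        linarith

lemma rcC_tsum : ∑' n : ℕ, rcC (n + 1 : ℕ) = -Complex.I / 2 - rcC 0 := by
  have hs : Summable (fun n : ℕ => rcC n) :=
    (summable_nat_add_iff (f := fun n : ℕ => rcC n) 1).1 rcC_summ
  have h1 := hs.hasSum
  have h2 : HasSum (fun n : ℕ => rcC (-(n + 1))) (∑' n : ℕ, rcC n) := by
    simpa only [rcC_symm] using h1
  have h3 := HasSum.of_nat_of_neg_add_one h1 h2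
  have h4 := rc_poisson h3.summable
  rw [h3.tsum_eq] at h4
  have h5 := hs.tsum_eq_zero_add
  simp only [Nat.cast_zero] at h5
  linear_combination h4 / 2 - h5

lemma rcA_tsum2 : ∑' n : ℕ, rcA (n + 1) = -2 * rcD + Complex.I / 8 + rcC 0 / 4 := by
  rw [rcA_tsum, rcC_tsum]; ring

noncomputable def rcF (ε : ℝ) (z : ℂ) : ℂ := Complex.exp (-((ε:ℂ) - Complex.I * π / 2) * z ^ 2)

lemma rcF_norm (ε x y : ℝ) :
    ‖rcF ε (x + y * Complex.I)‖ = Real.exp (-(ε * (x ^ 2 - y ^ 2)) - π * x * y) := by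
  rw [rcF, Complex.norm_exp]
  congr 1
  have : -((ε:ℂ) - Complex.I * π / 2) * ((x:ℂ) + y * Complex.I) ^ 2
    = ((-(ε * (x ^ 2 - y ^ 2)) - π * x * y : ℝ) : ℂ)
      + ((π * (x^2-y^2)/2 - 2 * ε * x * y : ℝ) : ℂ) * Complex.I := by
    push_cast
    linear_combination (π * x * y + Complex.I * π * y^2/2 - ε * y ^ 2: ℂ) * Complex.I_sq
  rw [this, Complex.add_re, Complex.ofReal_re, Complex.re_ofReal_mul, Complex.I_re]; ring

lemma rcF_bound (ε : ℝ) (h0 : 0 ≤ ε) (h1 : ε ≤ 1) (t : ℝ) :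
    ‖rcF ε (t + 2 * Complex.I)‖ ≤ Real.exp 4 * (t ^ 0 * Real.exp (-(2 * π) * t)) := by
  have := rcF_norm ε t 2
  push_cast at this
  rw [this, pow_zero, one_mul, ← Real.exp_add]
  apply Real.exp_le_exp.2
  nlinarith [mul_nonneg h0 (sq_nonneg t)]

lemma rcF_zero (z : ℂ) : rcF 0 z = rcE 0 z := by
  unfold rcF rcE; congr 1; push_cast; ring

open Filter Topology in
lemma rcF_gauss (ε : ℝ) (h0 : 0 < ε) (h1 : ε ≤ 1) :
    (π / ((ε:ℂ) - Complex.I * π / 2)) ^ (1 / 2 : ℂ) / 2 =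
    (∫ t in Ioi (0:ℝ), rcF ε (t + 2 * Complex.I)) + Complex.I * ∫ y in (0:ℝ)..2, rcF ε (y * Complex.I) := by
  have hre : 0 < ((ε:ℂ) - Complex.I * π / 2).re := by simp [h0]
  rw [← integral_gaussian_complex_Ioi hre]
  have hd : Differentiable ℂ (rcF ε) := by unfold rcF; fun_prop
  refine rc_shift (rcF ε) hd (integrable_cexp_neg_mul_sq hre).integrableOn ?_
    (fun R => Real.exp (-(ε * (R ^ 2 - 4)))) ?_ ?_
  · refine Integrable.mono' ((rc_mom 0 (a := 2 * π) (by positivity)).1.const_mul (Real.exp 4)) ?_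
      (ae_of_all _ fun t => rcF_bound ε h0.le h1 t)
    refine Continuous.aestronglyMeasurable ?_
    have := hd.continuous
    fun_prop
  · apply Real.tendsto_exp_atBot.comp
    apply tendsto_neg_atTop_atBot.comp
    apply Tendsto.const_mul_atTop h0
    exact tendsto_atTop_add_const_right _ (-4) (tendsto_pow_atTop (by norm_num))
  · intro R hR y hy hy2
    rw [rcF_norm]
    apply Real.exp_le_exp.2
    have : 0 ≤ π * R * y := by positivity
    have : y ^ 2 ≤ 4 := by nlinarith
    nlinarith

open Filter Topology in
lemma rc_fresnel : (∫ t in Ioi (0:ℝ), rcE 1 t) + Complex.I * (∫ y in (0:ℝ)..2, rcE 0 (y * Complex.I))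
    = (1 + Complex.I) / 2 := by
  have hcont : Continuous (fun q : ℝ × ℂ => rcF q.1 q.2) := by unfold rcF; fun_prop
  have l1 : Tendsto (fun ε : ℝ => (π / ((ε:ℂ) - Complex.I * π / 2)) ^ (1 / 2 : ℂ) / 2) (𝓝[>] 0)
      (𝓝 ((1 + Complex.I) / 2)) := by
    have hpi : (π:ℂ) ≠ 0 := by exact_mod_cast Real.pi_ne_zero
    have hv : (π:ℂ) / (((0:ℝ):ℂ) - Complex.I * π / 2) = (1 + Complex.I) ^ 2 := by
      have : Complex.I ≠ 0 := Complex.I_ne_zero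
      rw [div_eq_iff]
      · push_cast
        linear_combination (π * (Complex.I / 2 + 1 ): ℂ) * Complex.I_sq
      · simp [hpi]
    have hca : ContinuousAt (fun ε : ℝ => (π / ((ε:ℂ) - Complex.I * π / 2)) ^ (1 / 2 : ℂ) / 2) 0 := by
      refine ContinuousAt.div_const ?_ _
      refine ContinuousAt.cpow ?_ continuousAt_const ?_
      · refine ContinuousAt.div continuousAt_const ?_ ?_
        · fun_prop
        · simp [hpi]
      · rw [hv]
        right
        simp [pow_two]
    have := hca.tendsto
    rw [hv, one_div, Complex.sq_cpow_two_inv (by simp)] at this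
    rw [one_div]
    exact this.mono_left nhdsWithin_le_nhds
  have l2 : Tendsto (fun ε : ℝ => ∫ t in Ioi (0:ℝ), rcF ε (t + 2 * Complex.I)) (𝓝[>] 0)
      (𝓝 (∫ t in Ioi (0:ℝ), rcE 1 t)) := by
    refine tendsto_integral_filter_of_dominated_convergence
      (fun t => Real.exp 4 * (t ^ 0 * Real.exp (-(2 * π) * t))) ?_ ?_
      ((rc_mom 0 (a := 2 * π) (by positivity)).1.const_mul (Real.exp 4)) ?_
    · refine Eventually.of_forall fun ε => Continuous.aestronglyMeasurable ?_
      unfold rcF; fun_prop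
    · filter_upwards [Ioc_mem_nhdsGT (show (0:ℝ) < 1 by norm_num)] with ε hε
      exact ae_of_all _ fun t => rcF_bound ε hε.1.le hε.2 t
    · refine ae_of_all _ fun t => ?_
      rw [← rcE_shift 0 t, ← rcF_zero]
      have : Continuous (fun ε : ℝ => rcF ε (t + 2 * Complex.I)) := by unfold rcF; fun_prop
      exact this.continuousAt.tendsto.mono_left nhdsWithin_le_nhds
  have l3 : Tendsto (fun ε : ℝ => ∫ y in (0:ℝ)..2, rcF ε (y * Complex.I)) (𝓝[>] 0)
      (𝓝 (∫ y in (0:ℝ)..2, rcE 0 (y * Complex.I))) := by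
    simp only [← rcF_zero]
    have : Continuous (fun ε : ℝ => ∫ y in (0:ℝ)..2, rcF ε (y * Complex.I)) := by
      apply intervalIntegral.continuous_parametric_intervalIntegral_of_continuous'
      unfold rcF Function.uncurry; fun_prop
    exact this.continuousAt.tendsto.mono_left nhdsWithin_le_nhds
  refine tendsto_nhds_unique (l2.add (l3.const_mul Complex.I)) (l1.congr' ?_)
  filter_upwards [Ioc_mem_nhdsGT (show (0:ℝ) < 1 by norm_num)] with ε hε
  exact rcF_gauss ε hε.1 hε.2

noncomputable def rcK : ℂ := 1 / (2 * π) - 3 * Complex.I / (8 * π ^ 2)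

noncomputable def rcQ (z : ℂ) : ℂ :=
  1 / (8 * π) * z ^ 3 - Complex.I / (2 * π) * z ^ 2 - rcK * z + 1 / π ^ 2

lemma rcQ_deriv (z : ℂ) :
    HasDerivAt (fun z => rcQ z * rcE 0 z) ((rcP z - rcK) * rcE 0 z) z := by
  have hpi : (π:ℂ) ≠ 0 := by exact_mod_cast Real.pi_ne_zero
  have hQ : HasDerivAt rcQ (1 / (8 * π) * (3 * z ^ 2) - Complex.I / (2 * π) * (2 * z) - rcK) z := by
    unfold rcQ
    have h3 := (hasDerivAt_pow 3 z).const_mul (1 / (8 * π) : ℂ)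
    have h2 := (hasDerivAt_pow 2 z).const_mul (Complex.I / (2 * π) : ℂ)
    have h1 := (hasDerivAt_id z).const_mul rcK
    have := ((h3.sub h2).sub h1).add_const (1 / π ^ 2 : ℂ)
    refine this.congr_deriv ?_
    norm_num
  have hE : HasDerivAt (rcE 0) (rcE 0 z * (Complex.I * π * z)) z := by
    unfold rcE
    have h2 : HasDerivAt (fun z : ℂ => Complex.I * π * z ^ 2 / 2 - 2 * π * (0:ℕ) * z) (Complex.I * π * z) z := by
      have := ((hasDerivAt_pow 2 z).const_mul (Complex.I * π : ℂ)).div_const 2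
      have e : (fun z : ℂ => Complex.I * π * z ^ 2 / 2 - 2 * π * (0:ℕ) * z) =
          fun z : ℂ => Complex.I * π * z ^ 2 / 2 := by ext z; simp
      rw [e]
      refine this.congr_deriv ?_
      norm_num; ring
    exact h2.cexp
  refine (hQ.mul hE).congr_deriv ?_
  have : rcP z - rcK = (1 / (8 * π) * (3 * z ^ 2) - Complex.I / (2 * π) * (2 * z) - rcK) + rcQ z * (Complex.I * π * z) := by
    unfold rcP rcQ rcK
    field_simp
    ring_nf
    simp only [Complex.I_sq, show Complex.I ^ 3 = -Complex.I by rw [pow_succ, Complex.I_sq]; ring]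
    ring
  rw [this]; ring

lemma rc_vert : Complex.I * (∫ y in (0:ℝ)..2, rcP (y * Complex.I) * rcE 0 (y * Complex.I)) =
    rcQ (2 * Complex.I) - rcQ 0 + rcK * (Complex.I * ∫ y in (0:ℝ)..2, rcE 0 (y * Complex.I)) := by
  have hEc := (rcE_diff 0).continuous
  have hPc := rcP_diff.continuous
  have h := intervalIntegral.integral_eq_sub_of_hasDerivAt (a := 0) (b := 2)
    (f := fun y : ℝ => rcQ (y * Complex.I) * rcE 0 (y * Complex.I))
    (f' := fun y : ℝ => ((rcP (y * Complex.I) - rcK) * rcE 0 (y * Complex.I)) * Complex.I) (by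
      intro y _
      have h1 : HasDerivAt (fun y : ℂ => y * Complex.I) Complex.I (y:ℂ) := by
        simpa using (hasDerivAt_id (y:ℂ)).mul_const Complex.I
      have := (HasDerivAt.comp (y:ℂ) (rcQ_deriv (y * Complex.I)) h1).comp_ofReal
      exact this) (by
      apply Continuous.intervalIntegrable
      fun_prop)
  have e2 : rcE 0 (2 * Complex.I) = 1 := by
    have := rcE_shift 0 0
    rw [zero_add] at this
    rw [this]; simp [rcE]
  have e0 : rcE 0 0 = 1 := by simp [rcE]
  have hs : (∫ y in (0:ℝ)..2, ((rcP (y * Complex.I) - rcK) * rcE 0 (y * Complex.I)) * Complex.I)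
    = Complex.I * (∫ y in (0:ℝ)..2, rcP (y * Complex.I) * rcE 0 (y * Complex.I))
      - rcK * (Complex.I * ∫ y in (0:ℝ)..2, rcE 0 (y * Complex.I)) := by
    rw [← intervalIntegral.integral_const_mul, ← intervalIntegral.integral_const_mul,
      ← intervalIntegral.integral_const_mul, ← intervalIntegral.integral_sub]
    · congr 1; ext y; ring
    · apply Continuous.intervalIntegrable
      fun_prop
    · apply Continuous.intervalIntegrable
      fun_prop
  rw [hs] at h
  simp only [Complex.ofReal_zero, zero_mul, Complex.ofReal_ofNat, e0, e2] at h
  linear_combination h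

open Filter Topology in
lemma rc_horiz : rcD = -rcQ (2 * Complex.I) + rcK * ∫ t in Ioi (0:ℝ), rcE 1 t := by
  have hEc := (rcE_diff 1).continuous
  have hi1 : IntegrableOn (fun t : ℝ => rcK * rcE 1 t) (Ioi 0) := by
    refine rc_int (fun _ => rcK) continuous_const ‖rcK‖ (fun x hx => ?_) 1 le_rfl
    exact le_mul_of_one_le_right (norm_nonneg _) (one_le_pow₀ (by linarith))
  have hcq : Continuous rcQ := by unfold rcQ; fun_prop
  have h := integral_Ioi_of_hasDerivAt_of_tendsto (a := 0) (m := 0)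
    (f := fun t : ℝ => rcQ (t + 2 * Complex.I) * rcE 1 t)
    (f' := fun t : ℝ => rcP (t + 2 * Complex.I) * rcE 1 t - rcK * rcE 1 t) (by
      apply Continuous.continuousWithinAt
      fun_prop) (by
      intro t _
      have h1 : HasDerivAt (fun y : ℂ => y + 2 * Complex.I) 1 (t:ℂ) :=
        (hasDerivAt_id (t:ℂ)).add_const _
      have := (HasDerivAt.comp (t:ℂ) (rcQ_deriv (t + 2 * Complex.I)) h1).comp_ofReal
      simp only [Function.comp_def, rcE_shift, zero_add, mul_one, sub_mul] at this
      exact this) ((rc_intP2 1 le_rfl).sub hi1) (by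
      have ht := rc_tail.const_mul (‖(1 / (8 * π) : ℂ)‖ + ‖Complex.I / (2 * π)‖ + ‖rcK‖ + ‖(1 / π ^ 2 : ℂ)‖)
      rw [mul_zero] at ht
      refine squeeze_zero_norm' ?_ ht
      filter_upwards [eventually_ge_atTop 0] with t h0
      have hz : ‖(t:ℂ) + 2 * Complex.I‖ ≤ t + 2 := by
        refine (norm_add_le _ _).trans ?_
        simp [abs_of_nonneg h0]
      have h1 : (1:ℝ) ≤ t + 2 := by linarith
      have hE := rcE_le 1 le_rfl t 0 h0 le_rfl
      simp only [Complex.ofReal_zero, zero_mul, add_zero] at hE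
      have hp : ∀ n ≤ 4, ‖(t:ℂ) + 2 * Complex.I‖ ^ n ≤ (t + 2) ^ 4 := fun n hn =>
        (pow_le_pow_left₀ (norm_nonneg _) hz n).trans (pow_le_pow_right₀ h1 hn)
      have hQ : ‖rcQ (t + 2 * Complex.I)‖ ≤ (‖(1 / (8 * π) : ℂ)‖ + ‖Complex.I / (2 * π)‖ + ‖rcK‖ + ‖(1 / π ^ 2 : ℂ)‖) * (t + 2) ^ 4 := by
        unfold rcQ
        refine (norm_add_le _ _).trans ?_
        rw [add_mul _ _ ((t + 2) ^ 4)]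
        refine add_le_add ((norm_sub_le _ _).trans ?_) ?_
        · rw [add_mul _ _ ((t + 2) ^ 4)]
          refine add_le_add ((norm_sub_le _ _).trans ?_) ?_
          · rw [add_mul _ _ ((t + 2) ^ 4), norm_mul, norm_mul, norm_pow, norm_pow]
            gcongr
            · exact hp 3 (by norm_num)
            · exact hp 2 (by norm_num)
          · rw [norm_mul]
            gcongr
            simpa using hp 1 (by norm_num)
        · exact le_mul_of_one_le_right (norm_nonneg _) (one_le_pow₀ h1)
      rw [norm_mul]
      refine (mul_le_mul hQ hE (norm_nonneg _) (by positivity)).trans (le_of_eq ?_)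
      ring)
  rw [integral_sub (rc_intP2 1 le_rfl) hi1, integral_const_mul] at h
  have e0 : rcE 1 0 = 1 := by simp [rcE]
  simp only [Complex.ofReal_zero, zero_add, e0] at h
  rw [rcD]
  linear_combination h

lemma rcA_value : ∑' n : ℕ, rcA (n + 1) = 2 / π ^ 2 - rcK * (1 + Complex.I) + Complex.I / 8 := by
  rw [rcA_tsum2, rc_horiz]
  have h := rcC_eq 0
  rw [rc_vert] at h
  simp only [Nat.cast_zero] at h
  rw [h]
  have h0 : rcQ 0 = 1 / π ^ 2 := by simp [rcQ]
  rw [h0]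
  linear_combination (-2 * rcK) * rc_fresnel

lemma rcA_value_re : (∑' n : ℕ, rcA (n + 1)).re = (13 - 4 * π) / (8 * π ^ 2) := by
  have : ∑' n : ℕ, rcA (n + 1) = (((13 - 4 * π) / (8 * π ^ 2) : ℝ) : ℂ)
      + ((3 / (8 * π ^ 2) - 1 / (2 * π) + 1 / 8 : ℝ) : ℂ) * Complex.I := by
    have hpi : (π:ℂ) ≠ 0 := by exact_mod_cast Real.pi_ne_zero
    rw [rcA_value, rcK]
    push_cast
    field_simp
    ring_nf
    simp only [Complex.I_sq]
    ring
  rw [this, Complex.add_re, Complex.ofReal_re, Complex.re_ofReal_mul, Complex.I_re]; ring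

lemma rc_geom (t : ℝ) (ht : 0 < t) : ∑' n : ℕ, 2 * (t:ℂ) ^ 3 * rcE (n + 1) t =
    ((2 * t ^ 3 / (Real.exp (2 * π * t) - 1) : ℝ) : ℂ) * Complex.exp ((π * t ^ 2 / 2 : ℝ) * Complex.I) := by
  have hlt : Real.exp (-(2 * π * t)) < 1 := by
    rw [Real.exp_lt_one_iff]
    have : 0 < π * t := by positivity
    linarith
  have hs : HasSum (fun n : ℕ => Real.exp (-(2 * π * t)) * Real.exp (-(2 * π * t)) ^ n)
      (1 / (Real.exp (2 * π * t) - 1)) := by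
    have := (hasSum_geometric_of_lt_one (Real.exp_pos (-(2 * π * t))).le hlt).mul_left (Real.exp (-(2 * π * t)))
    suffices heq : 1 / (Real.exp (2 * π * t) - 1) =
        Real.exp (-(2 * π * t)) * (1 - Real.exp (-(2 * π * t)))⁻¹ by
      rw [heq]; exact this
    clear this
    have h1 : 1 - Real.exp (-(2 * π * t)) ≠ 0 := by linarith
    rw [Real.exp_neg] at *
    have h2 : Real.exp (2 * π * t) ≠ 0 := (Real.exp_pos _).ne'
    have h3 : Real.exp (2 * π * t) - 1 ≠ 0 := by
      intro h
      apply h1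
      rw [sub_eq_zero.1 h]; simp
    field_simp
  have hs2 := ((Complex.hasSum_ofReal.2 hs).mul_left (2 * (t:ℂ) ^ 3)).mul_right
    (Complex.exp ((π * t ^ 2 / 2 : ℝ) * Complex.I))
  convert hs2.tsum_eq using 1
  · congr 1; ext n
    rw [← pow_succ', ← Real.exp_nat_mul, Complex.ofReal_exp,
      mul_assoc _ (Complex.exp _) (Complex.exp _), ← Complex.exp_add, rcE]
    congr 2
    push_cast; ring
  · push_cast; ring

theorem ramanujan_RC_one_half :
    IntegrableOn
      (fun x : ℝ => x * Real.cos (π * x / 2) / (Real.exp (2 * π * Real.sqrt x) - 1)) (Ioi 0) ∧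
    (∫ x in Ioi (0:ℝ), x * Real.cos (π * x / 2) / (Real.exp (2 * π * Real.sqrt x) - 1)) =
      (13 - 4 * π) / (8 * π ^ 2) := by
  have hne : (13 - 4 * π) / (8 * π ^ 2) ≠ 0 := by
    have := Real.pi_lt_d2
    have h2 : (0:ℝ) < 13 - 4 * π := by linarith
    positivity
  suffices hv : (∫ x in Ioi (0:ℝ), x * Real.cos (π * x / 2) / (Real.exp (2 * π * Real.sqrt x) - 1)) =
      (13 - 4 * π) / (8 * π ^ 2) by
    refine ⟨?_, hv⟩
    by_contra hcon
    rw [integral_undef hcon] at hv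
    exact hne hv.symm
  have hS := (hasSum_integral_of_summable_integral_norm (μ := volume.restrict (Ioi (0:ℝ)))
    (F := fun (n : ℕ) (t : ℝ) => 2 * (t:ℂ) ^ 3 * rcE (n + 1) t)
    (fun n => rc_int3 (n + 1) (by omega)) rcA_normsum).tsum_eq
  change ∑' n : ℕ, rcA (n + 1) = _ at hS
  have hre := rcA_value_re
  rw [hS] at hre
  have hint : Integrable (fun t : ℝ => ∑' n : ℕ, 2 * (t:ℂ) ^ 3 * rcE (n + 1) t)
      (volume.restrict (Ioi (0:ℝ))) := by
    by_contra hcon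
    rw [integral_undef hcon] at hre
    exact hne hre.symm
  have hre2 := integral_re hint
  simp only [RCLike.re_eq_complex_re] at hre2
  rw [← hre, ← hre2, ← integral_comp_rpow_Ioi_of_pos (p := 2) (by norm_num)]
  refine setIntegral_congr_fun measurableSet_Ioi fun t ht => ?_
  have ht' : (0:ℝ) < t := ht
  rw [rc_geom t ht', Complex.re_ofReal_mul, Complex.exp_ofReal_mul_I_re]
  have e1 : t ^ ((2:ℝ) - 1) = t := by norm_num
  have e2 : t ^ (2:ℝ) = t ^ 2 := by norm_num
  rw [e1, e2, Real.sqrt_sq ht'.le, smul_eq_mul]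
  ring
end

section
/- The integral R_C(0, 0) = ∫_0^∞ 1/(exp(2π√x) − 1) dx converges and equals 1/12. -/
open MeasureTheory Real Set

/-- Ramanujan's integral `R_C(0, 0)` converges and equals `1/12`. -/
theorem ramanujan_RC_zero_zero :
    IntegrableOn
      (fun x : ℝ => 1 / (Real.exp (2 * π * Real.sqrt x) - 1)) (Ioi 0) ∧
    (∫ x in Ioi (0:ℝ), 1 / (Real.exp (2 * π * Real.sqrt x) - 1)) = 1 / 12 := by
  suffices h : (∫ x in Ioi (0:ℝ), 1 / (Real.exp (2 * π * Real.sqrt x) - 1)) = 1 / 12 by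
    refine ⟨?_, h⟩
    by_contra hc
    rw [integral_undef hc] at h
    norm_num at h
  have hpi := Real.pi_pos
  let F : ℕ → ℝ → ℝ := fun n x => Real.exp (-(2 * π * ((n:ℝ) + 1)) * x ^ (1/2 : ℝ))
  have hb : ∀ n : ℕ, 0 < 2 * π * ((n:ℝ) + 1) := fun n => by positivity
  have hval : ∀ n, ∫ x in Ioi (0:ℝ), F n x = 1 / (2 * π ^ 2) * (1 / ((n + 1 : ℕ) : ℝ) ^ 2) := by
    intro n
    have h1 := integral_exp_neg_mul_rpow (p := 1/2) (b := 2 * π * ((n:ℝ) + 1))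
      (by norm_num) (hb n)
    simp only [F]
    rw [h1]
    have h2 : Real.Gamma (1 / (1/2) + 1) = 2 := by
      have := Real.Gamma_nat_eq_factorial 2
      norm_num [Nat.factorial] at this ⊢
    have h3 : (2 * π * ((n:ℝ) + 1)) ^ (-1 / (1/2) : ℝ) = ((2 * π * ((n:ℝ) + 1)) ^ 2)⁻¹ := by
      rw [show (-1 / (1/2) : ℝ) = -((2:ℕ):ℝ) by norm_num, Real.rpow_neg (hb n).le,
        Real.rpow_natCast]
    rw [h2, h3]
    push_cast
    field_simp
    try norm_num
  have hint : ∀ n, Integrable (F n) (volume.restrict (Ioi 0)) := by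
    intro n
    by_contra hc
    have h := hval n
    rw [integral_undef hc] at h
    have : 0 < 1 / (2 * π ^ 2) * (1 / ((n + 1 : ℕ) : ℝ) ^ 2) := by positivity
    linarith
  have hz : HasSum (fun n : ℕ => 1 / (2 * π ^ 2) * (1 / ((n + 1 : ℕ) : ℝ) ^ 2)) (1 / 12) := by
    have h := (hasSum_nat_add_iff' 1).mpr hasSum_zeta_two
    have h' := h.mul_left (1 / (2 * π ^ 2))
    have e : 1 / (2 * π ^ 2) * (π ^ 2 / 6 - ∑ i ∈ Finset.range 1, (1 : ℝ) / (i : ℝ) ^ 2)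
        = 1 / 12 := by
      rw [Finset.sum_range_one]
      push_cast
      field_simp
      norm_num
      ring
    rw [e] at h'
    exact h'
  have hnorm : ∀ n, ∫ x in Ioi (0:ℝ), ‖F n x‖ = ∫ x in Ioi (0:ℝ), F n x := by
    intro n
    congr 1
    ext x
    exact Real.norm_of_nonneg (Real.exp_pos _).le
  have key := hasSum_integral_of_summable_integral_norm hint (by
    simp only [hnorm, hval]; exact hz.summable)
  simp only [hval] at key
  rw [← key.unique hz]
  refine setIntegral_congr_fun measurableSet_Ioi fun x hx => ?_
  have hx : 0 < x := hx
  have hs := Real.sqrt_pos.mpr hx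
  have hr1 : Real.exp (-(2 * π * √x)) < 1 := by
    rw [Real.exp_lt_one_iff]
    have : 0 < 2 * π * √x := by positivity
    linarith
  have hg := (hasSum_geometric_of_lt_one (Real.exp_pos _).le hr1).mul_left
    (Real.exp (-(2 * π * √x)))
  have hF : (fun n => F n x) = fun n : ℕ => Real.exp (-(2 * π * √x)) *
      Real.exp (-(2 * π * √x)) ^ n := by
    ext n
    simp only [F]
    rw [← Real.exp_nat_mul, ← Real.exp_add, ← Real.sqrt_eq_rpow]
    congr 1
    ring
  have h1 : 1 < Real.exp (2 * π * √x) := Real.one_lt_exp_iff.mpr (by positivity)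
  show _ = ∑' n, F n x
  rw [hF, hg.tsum_eq, Real.exp_neg]
  have : Real.exp (2 * π * √x) - 1 ≠ 0 := by linarith
  have h3 : 1 - (Real.exp (2 * π * √x))⁻¹ ≠ 0 := by
    have := inv_lt_one_of_one_lt₀ h1
    linarith
  field_simp
end

section
/- The integral R_C(0, 1) = ∫_0^∞ cos(πx)/(exp(2π√x) − 1) dx converges and equals (2 − √2)/8. -/
open MeasureTheory Real Set

lemma aux_dslope (f : ℂ → ℂ) (hf : Differentiable ℂ f) (p : ℂ) (h0 : f p = 0) :
    ∃ g : ℂ → ℂ, Differentiable ℂ g ∧ g p = deriv f p ∧ ∀ z, f z = (z - p) * g z := by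
  refine ⟨dslope f p, ?_, dslope_same f p, fun z => ?_⟩
  · have := (Complex.differentiableOn_dslope (f := f) (s := univ) (c := p) Filter.univ_mem).2
      hf.differentiableOn
    exact differentiableOn_univ.1 this
  · have := sub_smul_dslope f p z
    rw [smul_eq_mul, h0, sub_zero] at this
    exact this.symm

noncomputable def cc : ℂ := (Complex.I - Complex.exp (Complex.I * π / 4)) / 2

noncomputable def NN (z : ℂ) : ℂ :=
  Complex.exp (Complex.I * π * z ^ 2 + π * z) - Complex.cosh (π * z) ^ 2 - Complex.sinh (π * z)
    - 2 * cc * Complex.sinh (π * z) ^ 2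

noncomputable def DD (z : ℂ) : ℂ := 2 * Complex.sinh (π * z) ^ 2 * Complex.cosh (π * z)

lemma NN_diff : Differentiable ℂ NN := by unfold NN; fun_prop
lemma DD_diff : Differentiable ℂ DD := by unfold DD; fun_prop

lemma lim_double (p : ℂ) (hs : Complex.sinh (π * p) = 0) (hN : NN p = 0) (hN' : deriv NN p = 0) :
    ∃ L, Filter.Tendsto (fun z => NN z / DD z) (nhdsWithin p {p}ᶜ) (nhds L) := by
  obtain ⟨n1, d1, e1, f1⟩ := aux_dslope NN NN_diff p hN
  obtain ⟨n2, d2, e2, f2⟩ := aux_dslope n1 d1 p (e1.trans hN')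
  have dsinh : Differentiable ℂ (fun z : ℂ => Complex.sinh (π * z)) := by fun_prop
  obtain ⟨s, ds, es, fs⟩ := aux_dslope (fun z : ℂ => Complex.sinh (π * z)) dsinh p hs
  have hc : Complex.cosh (π * p) ≠ 0 := by
    intro h
    have := Complex.cosh_sq_sub_sinh_sq (π * p)
    rw [h, hs] at this; norm_num at this
  have hder : HasDerivAt (fun z : ℂ => Complex.sinh (π * z)) (Complex.cosh (π * p) * (π * 1)) p :=
    ((hasDerivAt_id p).const_mul (π : ℂ)).csinh
  have hsp : s p ≠ 0 := by
    rw [es, hder.deriv]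
    simp [hc, Real.pi_ne_zero]
  refine ⟨n2 p / (2 * s p ^ 2 * Complex.cosh (π * p)), ?_⟩
  have hcont : ContinuousAt (fun z => n2 z / (2 * s z ^ 2 * Complex.cosh (π * z))) p := by
    apply ContinuousAt.div
    · exact d2.continuous.continuousAt
    · have := ds.continuous
      apply Continuous.continuousAt; fun_prop
    · simp [hsp, hc]
  refine (hcont.tendsto.mono_left nhdsWithin_le_nhds).congr' ?_
  filter_upwards [self_mem_nhdsWithin] with z hz
  have hz' : z - p ≠ 0 := sub_ne_zero.2 hz
  simp only [DD]
  rw [f1 z, f2 z, show Complex.sinh (π * z) = (z - p) * s z from fs z]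
  rw [show (z - p) * ((z - p) * n2 z) = (z-p)^2 * n2 z by ring,
    show 2 * ((z - p) * s z) ^ 2 * Complex.cosh (π * z) = (z-p)^2 * (2 * s z ^ 2 * Complex.cosh (π * z)) by ring,
    mul_div_mul_left _ _ (pow_ne_zero 2 hz')]

lemma lim_simple (p : ℂ) (hs : Complex.cosh (π * p) = 0) (hN : NN p = 0) :
    ∃ L, Filter.Tendsto (fun z => NN z / DD z) (nhdsWithin p {p}ᶜ) (nhds L) := by
  obtain ⟨n1, d1, e1, f1⟩ := aux_dslope NN NN_diff p hN
  have dcosh : Differentiable ℂ (fun z : ℂ => Complex.cosh (π * z)) := by fun_prop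
  obtain ⟨s, ds, es, fs⟩ := aux_dslope (fun z : ℂ => Complex.cosh (π * z)) dcosh p hs
  have hc : Complex.sinh (π * p) ≠ 0 := by
    intro h
    have := Complex.cosh_sq_sub_sinh_sq (π * p)
    rw [h, hs] at this; norm_num at this
  have hder : HasDerivAt (fun z : ℂ => Complex.cosh (π * z)) (Complex.sinh (π * p) * (π * 1)) p :=
    ((hasDerivAt_id p).const_mul (π : ℂ)).ccosh
  have hsp : s p ≠ 0 := by
    rw [es, hder.deriv]
    simp [hc, Real.pi_ne_zero]
  refine ⟨n1 p / (2 * Complex.sinh (π * p) ^ 2 * s p), ?_⟩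
  have hcont : ContinuousAt (fun z => n1 z / (2 * Complex.sinh (π * z) ^ 2 * s z)) p := by
    apply ContinuousAt.div
    · exact d1.continuous.continuousAt
    · have := ds.continuous
      apply Continuous.continuousAt; fun_prop
    · simp [hsp, hc]
  refine (hcont.tendsto.mono_left nhdsWithin_le_nhds).congr' ?_
  filter_upwards [self_mem_nhdsWithin] with z hz
  have hz' : z - p ≠ 0 := sub_ne_zero.2 hz
  simp only [DD]
  rw [f1 z, show Complex.cosh (π * z) = (z - p) * s z from fs z]
  rw [show 2 * Complex.sinh (π * z) ^ 2 * ((z - p) * s z) = (z-p) * (2 * Complex.sinh (π * z) ^ 2 * s z) by ring,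
    mul_div_mul_left _ _ hz']

lemma NN_hasDeriv (p : ℂ) : HasDerivAt NN
    (Complex.exp (Complex.I * π * p ^ 2 + π * p) * (Complex.I * π * (2 * p) + π)
      - 2 * Complex.cosh (π * p) * (Complex.sinh (π * p) * π) - Complex.cosh (π * p) * π
      - 2 * cc * (2 * Complex.sinh (π * p) * (Complex.cosh (π * p) * π))) p := by
  have h1 : HasDerivAt (fun z : ℂ => (π : ℂ) * z) (π : ℂ) p := by
    simpa using (hasDerivAt_id p).const_mul (π : ℂ)
  have h2 : HasDerivAt (fun z : ℂ => Complex.I * π * z ^ 2) (Complex.I * π * (2 * p)) p := by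
    simpa using ((hasDerivAt_id p).pow 2).const_mul (Complex.I * π)
  have := (((h2.add h1).cexp.sub (h1.ccosh.pow 2)).sub h1.csinh).sub ((h1.csinh.pow 2).const_mul (2 * cc))
  exact this.congr_deriv (by simp)

lemma spi : Complex.sinh (π * Complex.I) = 0 := by simp [Complex.sinh_mul_I]
lemma cpi : Complex.cosh (π * Complex.I) = -1 := by simp [Complex.cosh_mul_I]
lemma spi2 : Complex.sinh (π * (Complex.I/2)) = Complex.I := by
  rw [show (π:ℂ) * (Complex.I/2) = (π/2 : ℂ) * Complex.I by ring, Complex.sinh_mul_I]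
  simp
lemma cpi2 : Complex.cosh (π * (Complex.I/2)) = 0 := by
  rw [show (π:ℂ) * (Complex.I/2) = (π/2 : ℂ) * Complex.I by ring, Complex.cosh_mul_I]
  simp

lemma lim0 : ∃ L, Filter.Tendsto (fun z => NN z / DD z) (nhdsWithin 0 {0}ᶜ) (nhds L) := by
  apply lim_double
  · simp
  · simp [NN]
  · rw [(NN_hasDeriv 0).deriv]; simp

lemma expI : Complex.exp (Complex.I * π * Complex.I ^ 2 + π * Complex.I) = 1 := by
  rw [show Complex.I * π * Complex.I ^ 2 + π * Complex.I = 0 by rw [Complex.I_sq]; ring]; simp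

lemma limI : ∃ L, Filter.Tendsto (fun z => NN z / DD z) (nhdsWithin Complex.I {Complex.I}ᶜ) (nhds L) := by
  apply lim_double
  · exact spi
  · rw [NN, expI, spi, cpi]; ring
  · rw [(NN_hasDeriv _).deriv, expI, spi, cpi]
    linear_combination 2 * π * Complex.I_mul_I

lemma limI2 : ∃ L, Filter.Tendsto (fun z => NN z / DD z)
    (nhdsWithin (Complex.I/2) {Complex.I/2}ᶜ) (nhds L) := by
  apply lim_simple
  · exact cpi2
  · rw [NN, spi2, cpi2, cc, show Complex.I * π * (Complex.I/2) ^ 2 + π * (Complex.I/2) = Complex.I * π / 4 by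
      rw [div_pow, Complex.I_sq]; ring]
    rw [Complex.I_sq]; ring

lemma DD_zero (z : ℂ) (h : DD z = 0) (h0 : 0 ≤ z.im) (h1 : z.im ≤ 1) :
    z = 0 ∨ z = Complex.I ∨ z = Complex.I / 2 := by
  have h2 : Complex.sinh (2 * (π * z)) = 0 := by
    rw [Complex.sinh_two_mul]
    simp only [DD] at h
    rcases mul_eq_zero.1 h with h | h
    · have : Complex.sinh (π * z) = 0 := by simpa using h
      simp [this]
    · simp [h]
  have h3 : Complex.exp (4 * (π * z)) = 1 := by
    rw [Complex.sinh, div_eq_zero_iff] at h2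
    have h4 : Complex.exp (2 * (π * z)) = Complex.exp (-(2 * (π * z))) :=
      sub_eq_zero.1 (h2.resolve_right (by norm_num))
    rw [show 4 * (π * z) = 2 * (π * z) + 2 * (π * z) by ring, Complex.exp_add]
    nth_rewrite 1 [h4]
    rw [← Complex.exp_add]; simp
  obtain ⟨n, hn⟩ := Complex.exp_eq_one_iff.1 h3
  have hpi : (π : ℂ) ≠ 0 := by exact_mod_cast Real.pi_ne_zero
  have hz : z = (n : ℂ) * Complex.I / 2 := by
    apply mul_left_cancel₀ hpi
    linear_combination hn / 4
  have him : z.im = n / 2 := by rw [hz]; simp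
  rw [him] at h0 h1
  have n0 : 0 ≤ n := by
    have : (0:ℝ) ≤ n := by linarith
    exact_mod_cast this
  have n2 : n ≤ 2 := by
    have : (n:ℝ) ≤ 2 := by linarith
    exact_mod_cast this
  interval_cases n
  · left; simp [hz]
  · right; right; simp [hz]
  · right; left; simp [hz]

lemma exists_g : ∃ g : ℂ → ℂ, (∀ z, 0 ≤ z.im → z.im ≤ 1 → DD z ≠ 0 → g z = NN z / DD z) ∧
    (∀ z, 0 ≤ z.im → z.im ≤ 1 → ContinuousAt g z) := by
  obtain ⟨a, ha⟩ := lim0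
  obtain ⟨b, hb⟩ := limI
  obtain ⟨c, hc⟩ := limI2
  have I0 : Complex.I ≠ 0 := Complex.I_ne_zero
  have I20 : Complex.I / 2 ≠ 0 := by simp
  have I2I : Complex.I / 2 ≠ Complex.I := by
    intro h
    have := congrArg Complex.im h
    norm_num at this
  let g : ℂ → ℂ := fun z => if z = 0 then a else if z = Complex.I then b else
    if z = Complex.I / 2 then c else NN z / DD z
  have hg0 : g 0 = a := by simp [g]
  have hgI : g Complex.I = b := by simp [g]
  have hgI2 : g (Complex.I/2) = c := by simp only [g]; rw [if_neg I20, if_neg I2I]; simp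
  have hgg : ∀ z, z ≠ 0 → z ≠ Complex.I → z ≠ Complex.I / 2 → g z = NN z / DD z := by
    intro z h1 h2 h3
    simp only [g]; rw [if_neg h1, if_neg h2, if_neg h3]
  have key : ∀ p L, g p = L → Filter.Tendsto (fun z => NN z / DD z) (nhdsWithin p {p}ᶜ) (nhds L) →
      ContinuousAt g p := by
    intro p L hL ht
    rw [continuousAt_iff_punctured_nhds, hL]
    refine ht.congr' ?_
    have hfin : ({0, Complex.I, Complex.I/2} \ {p} : Set ℂ).Finite := Set.Finite.sdiff (by simp)
    have : ({0, Complex.I, Complex.I/2} \ {p} : Set ℂ)ᶜ ∈ nhds p :=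
      hfin.isClosed.isOpen_compl.mem_nhds (by simp)
    filter_upwards [self_mem_nhdsWithin, nhdsWithin_le_nhds this] with z hz hz'
    have hz2 : z ∉ ({0, Complex.I, Complex.I/2} : Set ℂ) := fun h => hz' ⟨h, hz⟩
    simp only [mem_insert_iff, mem_singleton_iff, not_or] at hz2
    exact (hgg z hz2.1 hz2.2.1 hz2.2.2).symm
  have gD : ∀ z, 0 ≤ z.im → z.im ≤ 1 → DD z ≠ 0 → g z = NN z / DD z := by
    intro z h0 h1 hD
    apply hgg
    · rintro rfl; exact hD (by simp [DD])
    · rintro rfl; exact hD (by simp [DD, spi])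
    · rintro rfl; exact hD (by simp [DD, cpi2])
  refine ⟨g, gD, ?_⟩
  intro z h0 h1
  by_cases hD : DD z = 0
  · rcases DD_zero z hD h0 h1 with rfl | rfl | rfl
    · exact key _ _ hg0 ha
    · exact key _ _ hgI hb
    · exact key _ _ hgI2 hc
  · refine key z _ (gD z h0 h1 hD) ?_
    exact ((NN_diff z).continuousAt.div (DD_diff z).continuousAt hD).tendsto.mono_left nhdsWithin_le_nhds

lemma norm_exp_sub_ge (w : ℂ) (a : ℝ) (h : |w.re| = a) :
    Real.exp a - Real.exp (-a) ≤ ‖Complex.exp w - Complex.exp (-w)‖ ∧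
    Real.exp a - Real.exp (-a) ≤ ‖Complex.exp w + Complex.exp (-w)‖ := by
  have e1 : ‖Complex.exp w‖ = Real.exp w.re := Complex.norm_exp w
  have e2 : ‖Complex.exp (-w)‖ = Real.exp (-w.re) := by rw [Complex.norm_exp]; simp
  have k1 := norm_sub_norm_le (Complex.exp w) (Complex.exp (-w))
  have k2 := norm_sub_norm_le (Complex.exp (-w)) (Complex.exp w)
  have k3 := norm_sub_norm_le (Complex.exp w) (-Complex.exp (-w))
  have k4 := norm_sub_norm_le (-Complex.exp (-w)) (Complex.exp w)
  rw [norm_sub_rev] at k2 k4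
  rw [sub_neg_eq_add, norm_neg] at k3 k4
  rw [e1, e2] at k1 k2 k3 k4
  rcases abs_choice w.re with h' | h' <;> rw [h'] at h <;> subst h
  · exact ⟨k1, k3⟩
  · rw [neg_neg]; exact ⟨k2, k4⟩

lemma exp_bounds (w : ℂ) (a : ℝ) (h : |w.re| = a) (ha : 1 ≤ a) :
    Real.exp a / 4 ≤ ‖Complex.sinh w‖ ∧ Real.exp a / 4 ≤ ‖Complex.cosh w‖ ∧
    ‖Complex.sinh w‖ ≤ Real.exp a ∧ ‖Complex.cosh w‖ ≤ Real.exp a := by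
  obtain ⟨h1, h2⟩ := norm_exp_sub_ge w a h
  have e1 : ‖Complex.exp w‖ ≤ Real.exp a := by
    rw [Complex.norm_exp, Real.exp_le_exp, ← h]; exact le_abs_self _
  have e2 : ‖Complex.exp (-w)‖ ≤ Real.exp a := by
    rw [Complex.norm_exp, Real.exp_le_exp, ← h]; exact neg_le_abs _
  have h3 : Real.exp (-a) ≤ 1 := Real.exp_le_one_iff.2 (by linarith)
  have h4 : 2 ≤ Real.exp a := by linarith [Real.add_one_le_exp a]
  have k1 := norm_sub_le (Complex.exp w) (Complex.exp (-w))
  have k2 := norm_add_le (Complex.exp w) (Complex.exp (-w))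
  rw [Complex.sinh, Complex.cosh, norm_div, norm_div, Complex.norm_ofNat]
  refine ⟨?_, ?_, ?_, ?_⟩ <;> linarith

lemma bound_side (x y R : ℝ) (hx : |x| = R) (hR : 1 ≤ R) (h0 : 0 ≤ y) (h1 : y ≤ 1) :
    DD (x + y * Complex.I) ≠ 0 ∧
    ‖NN (x + y * Complex.I) / DD (x + y * Complex.I)‖ ≤ (96 + 64 * ‖cc‖) * Real.exp (-R) := by
  set z : ℂ := x + y * Complex.I with hz
  have hre : |((π : ℂ) * z).re| = π * R := by
    have : ((π : ℂ) * z).re = π * x := by simp [hz]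
    rw [this, abs_mul, hx, abs_of_pos Real.pi_pos]
  have hpi := Real.pi_gt_three
  have hRp : R ≤ π * R := by nlinarith
  obtain ⟨s1, c1, s2, c2⟩ := exp_bounds _ _ hre (by linarith)
  set E := Real.exp (π * R) with hE
  have hE1 : 1 ≤ E := Real.one_le_exp (by positivity)
  have hg : ‖Complex.exp (Complex.I * π * z ^ 2 + π * z)‖ ≤ E := by
    rw [Complex.norm_exp, hE, Real.exp_le_exp]
    have : (Complex.I * π * z ^ 2 + π * z).re = π * (x * (1 - 2 * y)) := by
      simp [hz, pow_two]; ring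
    rw [this]
    apply mul_le_mul_of_nonneg_left _ Real.pi_pos.le
    calc x * (1 - 2 * y) ≤ |x * (1 - 2*y)| := le_abs_self _
      _ = R * |1 - 2*y| := by rw [abs_mul, hx]
      _ ≤ R * 1 := by
        apply mul_le_mul_of_nonneg_left _ (by linarith)
        rw [abs_le]; constructor <;> linarith
      _ = R := mul_one R
  have hN : ‖NN z‖ ≤ (3 + 2 * ‖cc‖) * E ^ 2 := by
    have hEE : E ≤ E ^ 2 := by nlinarith
    have a1 : ‖Complex.cosh (π * z) ^ 2‖ ≤ E ^ 2 := by
      rw [norm_pow]; gcongr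
    have a2 : ‖2 * cc * Complex.sinh (π * z) ^ 2‖ ≤ 2 * ‖cc‖ * E ^ 2 := by
      rw [norm_mul, norm_mul, norm_pow, Complex.norm_ofNat]; gcongr
    rw [NN]
    refine (norm_sub_le _ _).trans ?_
    have b1 := norm_sub_le (Complex.exp (Complex.I * π * z ^ 2 + π * z) - Complex.cosh (π * z) ^ 2)
      (Complex.sinh (π * z))
    have b2 := norm_sub_le (Complex.exp (Complex.I * π * z ^ 2 + π * z)) (Complex.cosh (π * z) ^ 2)
    linarith
  have hD : E ^ 3 / 32 ≤ ‖DD z‖ := by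
    rw [DD, norm_mul, norm_mul, norm_pow, Complex.norm_ofNat]
    calc E ^ 3 / 32 = 2 * (E / 4) ^ 2 * (E / 4) := by ring
      _ ≤ _ := by gcongr
  have hE0 : 0 < E := by linarith
  have hDpos : 0 < ‖DD z‖ := lt_of_lt_of_le (by positivity) hD
  refine ⟨norm_pos_iff.1 hDpos, ?_⟩
  rw [norm_div]
  calc ‖NN z‖ / ‖DD z‖ ≤ ((3 + 2 * ‖cc‖) * E ^ 2) / (E ^ 3 / 32) := by gcongr
    _ = (96 + 64 * ‖cc‖) * E⁻¹ := by field_simp; ring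
    _ ≤ _ := by
      rw [hE, ← Real.exp_neg]
      gcongr

lemma DD_real (x : ℝ) (hx : x ≠ 0) : DD x ≠ 0 := by
  rw [DD, ← Complex.ofReal_mul, ← Complex.ofReal_sinh, ← Complex.ofReal_cosh]
  have h1 : Real.sinh (π * x) ≠ 0 := by simp [Real.pi_ne_zero, hx]
  have h2 := (Real.cosh_pos (π * x)).ne'
  norm_cast
  positivity

lemma sinh_shift (z : ℂ) : Complex.sinh (π * (z + Complex.I)) = - Complex.sinh (π * z) := by
  rw [mul_add, Complex.sinh_add, spi, cpi]; ring
lemma cosh_shift (z : ℂ) : Complex.cosh (π * (z + Complex.I)) = - Complex.cosh (π * z) := by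
  rw [mul_add, Complex.cosh_add, spi, cpi]; ring
lemma DD_shift (z : ℂ) : DD (z + Complex.I) = - DD z := by
  rw [DD, sinh_shift, cosh_shift, DD]; ring

lemma NN_shift (z : ℂ) : NN z + NN (z + Complex.I) =
    2 * (Complex.exp (Complex.I * π * z ^ 2) * Complex.cosh (π * z) - Complex.cosh (π * z) ^ 2
      - 2 * cc * Complex.sinh (π * z) ^ 2) := by
  rw [NN, NN, sinh_shift, cosh_shift]
  have : Complex.I * π * (z + Complex.I) ^ 2 + π * (z + Complex.I)
      = Complex.I * π * z ^ 2 + -(π * z) := by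
    linear_combination (π * (2 * z + Complex.I)) * Complex.I_sq
  rw [this, Complex.exp_add, Complex.exp_add, Complex.cosh]
  ring

lemma cc_im : cc.im = (1 - √2 / 2) / 2 := by
  have : Complex.exp (Complex.I * π / 4) = Complex.exp ((π / 4 : ℝ) * Complex.I) := by
    congr 1; push_cast; ring
  rw [cc, this, Complex.exp_ofReal_mul_I]
  simp [← Complex.ofReal_cos, ← Complex.ofReal_sin]

lemma diff_im (x : ℝ) (hx : x ≠ 0) :
    (NN x / DD x - NN (x + Complex.I) / DD (x + Complex.I)).im =
      Real.sin (π * x ^ 2) / Real.sinh (π * x) ^ 2 - (1 - √2 / 2) * (1 / Real.cosh (π * x)) := by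
  have h1 : Real.sinh (π * x) ≠ 0 := by simp [Real.pi_ne_zero, hx]
  have h2 := (Real.cosh_pos (π * x)).ne'
  have e : NN x / DD x - NN (x + Complex.I) / DD (x + Complex.I) =
      Complex.exp ((π * x ^ 2 : ℝ) * Complex.I) / (Real.sinh (π * x) ^ 2 : ℝ)
        - (Real.cosh (π * x) / Real.sinh (π * x) ^ 2 : ℝ) - 2 * cc * (1 / Real.cosh (π * x) : ℝ) := by
    rw [DD_shift, div_neg, sub_neg_eq_add, ← add_div, NN_shift, DD]
    rw [← Complex.ofReal_mul, ← Complex.ofReal_sinh, ← Complex.ofReal_cosh,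
      show Complex.I * π * (x:ℂ) ^ 2 = (π * x ^ 2 : ℝ) * Complex.I by push_cast; ring]
    have h1' : (Real.sinh (π * x) : ℂ) ≠ 0 := by exact_mod_cast h1
    have h2' : (Real.cosh (π * x) : ℂ) ≠ 0 := by exact_mod_cast h2
    simp only [Complex.ofReal_div, Complex.ofReal_pow, Complex.ofReal_one]
    field_simp
  rw [e, Complex.sub_im, Complex.sub_im, Complex.ofReal_im, Complex.div_ofReal_im,
    Complex.exp_ofReal_mul_I_im, Complex.im_mul_ofReal, Complex.mul_im]
  simp [cc_im]
  left; ring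

lemma contour : Filter.Tendsto (fun R : ℝ => ∫ x in (-R)..R,
    (Real.sin (π * x ^ 2) / Real.sinh (π * x) ^ 2 - (1 - √2 / 2) * (1 / Real.cosh (π * x))))
    Filter.atTop (nhds 0) := by
  obtain ⟨g, hg, gc⟩ := exists_g
  have hbound : ∀ R : ℝ, 1 ≤ R → ‖∫ x in (-R)..R,
    (Real.sin (π * x ^ 2) / Real.sinh (π * x) ^ 2 - (1 - √2 / 2) * (1 / Real.cosh (π * x)))‖ ≤
      2 * ((96 + 64 * ‖cc‖) * Real.exp (-R)) := by
    intro R hR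
    have hrect := Complex.integral_boundary_rect_eq_zero_of_differentiable_on_off_countable g
      (-R : ℝ) ((R : ℝ) + Complex.I) {0, Complex.I, Complex.I / 2}
      ((Set.toFinite _).countable) (by
        intro z hz
        rw [Complex.mem_reProdIm] at hz
        have := hz.2
        simp at this
        exact (gc z this.1 this.2).continuousWithinAt) (by
        intro z hz
        obtain ⟨hz, hz3⟩ := hz
        rw [Complex.mem_reProdIm] at hz
        have h2 := hz.2
        simp at h2
        have hD : DD z ≠ 0 := by
          intro h
          apply hz3
          rcases DD_zero z h h2.1.le h2.2.le with h | h | h <;> simp [h]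
        have hd : DifferentiableAt ℂ (fun z => NN z / DD z) z := (NN_diff z).div (DD_diff z) hD
        refine hd.congr_of_eventuallyEq ?_
        have o1 : ∀ᶠ w : ℂ in nhds z, 0 < w.im :=
          Complex.continuous_im.continuousAt.eventually_const_lt h2.1
        have o2 : ∀ᶠ w : ℂ in nhds z, w.im < 1 :=
          Complex.continuous_im.continuousAt.eventually_lt_const h2.2
        have o3 : ∀ᶠ w : ℂ in nhds z, DD w ≠ 0 := (DD_diff z).continuousAt.eventually_ne hD
        filter_upwards [o1, o2, o3] with w a b c
        exact hg w a.le b.le c)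
    simp only [Complex.add_re, Complex.add_im, Complex.ofReal_re, Complex.ofReal_im, Complex.I_re,
      Complex.I_im, add_zero, zero_add, Complex.ofReal_zero, zero_mul, Complex.ofReal_one,
      one_mul, smul_eq_mul] at hrect
    have i1 : IntervalIntegrable (fun x : ℝ => g x) volume (-R) R := by
      apply Continuous.intervalIntegrable
      rw [continuous_iff_continuousAt]
      intro x
      exact ContinuousAt.comp (g := g) (gc x (by simp) (by simp)) Complex.continuous_ofReal.continuousAt
    have i2 : IntervalIntegrable (fun x : ℝ => g (x + Complex.I)) volume (-R) R := by
      apply Continuous.intervalIntegrable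
      rw [continuous_iff_continuousAt]
      intro x
      exact ContinuousAt.comp (g := g) (f := fun x : ℝ => (x : ℂ) + Complex.I)
        (gc _ (by simp) (by simp)) (by fun_prop)
    have side : ∀ x : ℝ, |x| = R → ‖∫ y in (0:ℝ)..1, g (x + y * Complex.I)‖ ≤
        (96 + 64 * ‖cc‖) * Real.exp (-R) := by
      intro x hx
      have := intervalIntegral.norm_integral_le_of_norm_le_const (a := (0:ℝ)) (b := 1)
        (f := fun y : ℝ => g (x + y * Complex.I)) (C := (96 + 64 * ‖cc‖) * Real.exp (-R)) (by
          intro y hy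
          rw [uIoc_of_le zero_le_one] at hy
          obtain ⟨hD, hb⟩ := bound_side x y R hx hR hy.1.le hy.2
          rw [hg _ (by simpa using hy.1.le) (by simpa using hy.2) hD]
          exact hb)
      simpa using this
    have s1 := side R (abs_of_pos (by linarith))
    have s2 := side (-R) (by rw [abs_neg]; exact abs_of_pos (by linarith))
    have hdiff : ‖∫ x in (-R)..R, (g x - g (x + Complex.I))‖ ≤
        2 * ((96 + 64 * ‖cc‖) * Real.exp (-R)) := by
      rw [intervalIntegral.integral_sub i1 i2]
      have : (∫ x in (-R)..R, g x) - (∫ x in (-R)..R, g (x + Complex.I)) =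
        Complex.I * (∫ y in (0:ℝ)..1, g ((-R : ℝ) + y * Complex.I)) -
        Complex.I * (∫ y in (0:ℝ)..1, g (R + y * Complex.I)) := by
        linear_combination hrect
      rw [this]
      refine (norm_sub_le _ _).trans ?_
      rw [norm_mul, norm_mul, Complex.norm_I]
      linarith
    have him : (∫ x in (-R)..R, (Real.sin (π * x ^ 2) / Real.sinh (π * x) ^ 2
        - (1 - √2 / 2) * (1 / Real.cosh (π * x)))) = (∫ x in (-R)..R, (g x - g (x + Complex.I))).im := by
      have := ContinuousLinearMap.intervalIntegral_comp_comm Complex.imCLM (i1.sub i2)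
      rw [Complex.imCLM_apply] at this
      rw [← this]
      apply intervalIntegral.integral_congr_ae
      have h0 : ∀ᵐ x : ℝ, x ≠ 0 := by
        simp [ae_iff]
      filter_upwards [h0] with x hx _
      rw [← diff_im x hx, Complex.imCLM_apply, hg x (by simp) (by simp) (DD_real x hx),
        hg (x + Complex.I) (by simp) (by simp) (by rw [DD_shift]; exact neg_ne_zero.2 (DD_real x hx))]
    rw [him]
    exact (Complex.abs_im_le_norm _).trans hdiff
  refine squeeze_zero_norm' (Filter.eventually_atTop.2 ⟨1, hbound⟩) ?_
  have := (Real.tendsto_exp_neg_atTop_nhds_zero.const_mul (96 + 64 * ‖cc‖)).const_mul 2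
  simpa using this

lemma sinh_sq_ge (x : ℝ) : (π * x) ^ 2 ≤ Real.sinh (π * x) ^ 2 := by
  rw [sq_le_sq, Real.abs_sinh]
  exact Real.self_le_sinh_iff.2 (abs_nonneg _)

lemma s_integrable : Integrable (fun x : ℝ => Real.sin (π * x ^ 2) / Real.sinh (π * x) ^ 2) := by
  refine integrable_inv_one_add_sq.mono' (Measurable.aestronglyMeasurable (by fun_prop)) (Filter.Eventually.of_forall fun x => ?_)
  by_cases hx : x = 0
  · simp [hx]
  have hpi := Real.pi_gt_three
  have h := sinh_sq_ge x
  have hx2 : 0 < x ^ 2 := by positivity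
  have hp : 0 < (π * x) ^ 2 := by positivity
  have hs : 0 < Real.sinh (π * x) ^ 2 := lt_of_lt_of_le hp h
  rw [norm_div, Real.norm_eq_abs, Real.norm_eq_abs, abs_of_pos hs, div_le_iff₀ hs, inv_mul_eq_div,
    le_div_iff₀ (by positivity)]
  have a1 : |Real.sin (π * x ^ 2)| ≤ 1 := Real.abs_sin_le_one _
  have a2 : |Real.sin (π * x ^ 2)| ≤ π * x ^ 2 := by
    have := Real.abs_sin_le_abs (x := π * x ^ 2)
    rwa [abs_of_pos (show 0 < π * x ^ 2 by positivity)] at this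
  have a3 : |Real.sin (π * x ^ 2)| * x ^ 2 ≤ x ^ 2 := by nlinarith
  have : (π * x ^ 2) + x ^ 2 ≤ (π * x) ^ 2 := by
    have : π + 1 ≤ π ^ 2 := by nlinarith
    nlinarith
  linarith

lemma sech_int (R : ℝ) : ∫ x in (-R)..R, 1 / Real.cosh (π * x) = 2 / π * Real.arctan (Real.sinh (π * R)) := by
  have hd : ∀ x : ℝ, HasDerivAt (fun x => 1 / π * Real.arctan (Real.sinh (π * x))) (1 / Real.cosh (π * x)) x := by
    intro x
    have h1 : HasDerivAt (fun z : ℝ => π * z) π x := by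
      simpa using (hasDerivAt_id x).const_mul π
    refine (h1.sinh.arctan.const_mul (1 / π)).congr_deriv ?_
    have := (Real.cosh_pos (π * x)).ne'
    rw [add_comm, ← Real.cosh_sq]
    field_simp
  rw [intervalIntegral.integral_eq_sub_of_hasDerivAt (fun x _ => hd x)]
  · simp; ring
  · apply Continuous.intervalIntegrable
    exact continuous_const.div (by fun_prop) (fun x => (Real.cosh_pos _).ne')

lemma s_value : ∫ x : ℝ, Real.sin (π * x ^ 2) / Real.sinh (π * x) ^ 2 = 1 - √2 / 2 := by
  have h1 := intervalIntegral_tendsto_integral s_integrable Filter.tendsto_neg_atTop_atBot Filter.tendsto_id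
  have h2 : Filter.Tendsto (fun R : ℝ => ∫ x in (-R)..R, 1 / Real.cosh (π * x)) Filter.atTop (nhds 1) := by
    simp_rw [sech_int]
    have hs : Filter.Tendsto (fun R : ℝ => Real.sinh (π * R)) Filter.atTop Filter.atTop := by
      refine Filter.tendsto_atTop_mono' _ ?_ (Filter.tendsto_id.const_mul_atTop Real.pi_pos)
      filter_upwards [Filter.eventually_ge_atTop 0] with x hx
      exact Real.self_le_sinh_iff.2 (by positivity)
    have := ((tendsto_nhds_of_tendsto_nhdsWithin Real.tendsto_arctan_atTop).comp hs).const_mul (2 / π)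
    have e : 2 / π * (π / 2) = 1 := by field_simp
    rw [e] at this
    exact this
  have h3 := contour.add (h2.const_mul (1 - √2 / 2))
  rw [zero_add, mul_one] at h3
  refine tendsto_nhds_unique h1 (h3.congr fun R => ?_)
  have hc : IntervalIntegrable (fun x : ℝ => (1 - √2 / 2) * (1 / Real.cosh (π * x))) volume (-R) R := by
    apply Continuous.intervalIntegrable
    exact continuous_const.mul (continuous_const.div (by fun_prop) (fun x => (Real.cosh_pos _).ne'))
  rw [intervalIntegral.integral_sub s_integrable.intervalIntegrable hc,
    intervalIntegral.integral_const_mul]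
  simp

lemma s_half : ∫ x in Ioi (0:ℝ), Real.sin (π * x ^ 2) / Real.sinh (π * x) ^ 2 = (1 - √2 / 2) / 2 := by
  have := integral_comp_abs (f := fun x : ℝ => Real.sin (π * x ^ 2) / Real.sinh (π * x) ^ 2)
  have e : (fun x : ℝ => Real.sin (π * |x| ^ 2) / Real.sinh (π * |x|) ^ 2) =
      fun x : ℝ => Real.sin (π * x ^ 2) / Real.sinh (π * x) ^ 2 := by
    funext x
    rcases abs_choice x with h | h <;> simp [h]
  simp only [e] at this
  rw [s_value] at this
  linarith

lemma f_integrable : IntegrableOn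
      (fun x : ℝ => Real.cos (π * x) / (Real.exp (2 * π * Real.sqrt x) - 1)) (Ioi 0) := by
  have hpi := Real.pi_gt_three
  have hm : Measurable (fun x : ℝ => Real.cos (π * x) / (Real.exp (2 * π * Real.sqrt x) - 1)) := by
    fun_prop
  have hb : ∀ x : ℝ, 0 < x → ∀ B : ℝ, 0 < B → B ≤ Real.exp (2 * π * Real.sqrt x) - 1 →
      ‖Real.cos (π * x) / (Real.exp (2 * π * Real.sqrt x) - 1)‖ ≤ B⁻¹ := by
    intro x hx B hB hBB
    rw [norm_div, Real.norm_eq_abs, Real.norm_eq_abs, abs_of_pos (lt_of_lt_of_le hB hBB), ← one_div]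
    gcongr
    exact Real.abs_cos_le_one _
  rw [← Ioc_union_Ioi_eq_Ioi (zero_le_one (α := ℝ))]
  refine IntegrableOn.union ?_ ?_
  · have h1 : IntegrableOn (fun x : ℝ => x ^ (-(1/2) : ℝ)) (Ioc 0 1) := by
      rw [← intervalIntegrable_iff_integrableOn_Ioc_of_le zero_le_one]
      exact intervalIntegral.intervalIntegrable_rpow' (by norm_num)
    refine Integrable.mono' h1 hm.aestronglyMeasurable ?_
    filter_upwards [ae_restrict_mem measurableSet_Ioc] with x hx
    have hs : 0 < √x := Real.sqrt_pos.2 hx.1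
    rw [Real.rpow_neg hx.1.le, ← Real.sqrt_eq_rpow]
    refine hb x hx.1 _ hs ?_
    have := Real.add_one_le_exp (2 * π * √x)
    nlinarith
  · have h1 : IntegrableOn (fun x : ℝ => x ^ (-2 : ℝ)) (Ioi 1) :=
      integrableOn_Ioi_rpow_of_lt (by norm_num) one_pos
    refine Integrable.mono' h1 hm.aestronglyMeasurable ?_
    filter_upwards [ae_restrict_mem measurableSet_Ioi] with x hx
    have hx1 : (1:ℝ) < x := hx
    have hx0 : (0:ℝ) < x := by linarith
    rw [Real.rpow_neg hx0.le]
    refine hb x hx0 _ (by positivity) ?_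
    have h4 := Real.pow_div_factorial_le_exp (2 * π * √x) (by positivity) 4
    have e : (2 * π * √x) ^ 4 = 16 * π ^ 4 * x ^ 2 := by
      have := Real.sq_sqrt hx0.le
      rw [mul_pow, mul_pow, show √x ^ 4 = (√x ^ 2) ^ 2 by ring, this]; norm_num
    have hp4 : 81 ≤ π ^ 4 := by
      calc (81:ℝ) = 3 ^ 4 := by norm_num
        _ ≤ π ^ 4 := by gcongr
    rw [e] at h4
    norm_num [Nat.factorial] at h4 ⊢
    nlinarith

lemma ibp_deriv (t : ℝ) (ht : 0 < t) :
    HasDerivAt (fun t : ℝ => Real.sin (π * t ^ 2) / π / (Real.exp (2 * π * t) - 1))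
    (2 * t * (Real.cos (π * t ^ 2) / (Real.exp (2 * π * t) - 1))
      - 1 / 2 * (Real.sin (π * t ^ 2) / Real.sinh (π * t) ^ 2)) t := by
  have h1 : HasDerivAt (fun z : ℝ => 2 * π * z) (2 * π) t := by
    simpa using (hasDerivAt_id t).const_mul (2 * π)
  have h2 : HasDerivAt (fun z : ℝ => π * z ^ 2) (π * (2 * t)) t := by
    simpa using ((hasDerivAt_id t).pow 2).const_mul π
  have hE : Real.exp (2 * π * t) - 1 ≠ 0 := by
    have := Real.add_one_lt_exp (x := 2 * π * t) (by positivity)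
    have : 0 < 2 * π * t := by positivity
    linarith
  refine ((h2.sin.div_const π).div (h1.exp.sub_const 1) hE).congr_deriv ?_
  have hs : 4 * Real.sinh (π * t) ^ 2 * Real.exp (2 * π * t) = (Real.exp (2 * π * t) - 1) ^ 2 := by
    have a : Real.exp (2 * π * t) = Real.exp (π * t) ^ 2 := by rw [← Real.exp_nat_mul]; congr 1; push_cast; ring
    have b : Real.exp (π * t) * Real.exp (-(π * t)) = 1 := by rw [← Real.exp_add]; simp
    rw [Real.sinh_eq, a]
    generalize Real.exp (π * t) = u at *
    generalize Real.exp (-(π * t)) = v at *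
    linear_combination ((u * v - 1) + 2 - 2 * u ^ 2 ) * b
  have hsn : Real.sinh (π * t) ≠ 0 := by
    have : 0 < π * t := by positivity
    exact (Real.sinh_pos_iff.2 this).ne'
  have : Real.sin (π * t ^ 2) / Real.sinh (π * t) ^ 2 =
    4 * Real.exp (2 * π * t) * Real.sin (π * t ^ 2) / (Real.exp (2 * π * t) - 1) ^ 2 := by
    rw [← hs]
    have := (Real.exp_pos (2 * π * t)).ne'
    field_simp
  rw [this]
  field_simp
  try ring

lemma ibp_lim0 : ContinuousWithinAt (fun t : ℝ => Real.sin (π * t ^ 2) / π / (Real.exp (2 * π * t) - 1))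
    (Ici 0) 0 := by
  have hpi := Real.pi_gt_three
  rw [ContinuousWithinAt]
  simp only [ne_eq, OfNat.ofNat_ne_zero, not_false_eq_true, zero_pow, mul_zero, Real.sin_zero, zero_div]
  have : Filter.Tendsto (fun t : ℝ => t) (nhdsWithin 0 (Ici 0)) (nhds 0) :=
    Filter.tendsto_id.mono_left nhdsWithin_le_nhds
  refine squeeze_zero_norm' ?_ this
  filter_upwards [self_mem_nhdsWithin] with t ht
  rcases eq_or_lt_of_le (show (0:ℝ) ≤ t from ht) with h | h
  · simp [← h]
  have a := Real.add_one_le_exp (2 * π * t)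
  have b := Real.abs_sin_le_abs (x := π * t ^ 2)
  rw [abs_of_pos (show 0 < π * t ^ 2 by positivity)] at b
  have c : 0 < 2 * π * t := by positivity
  rw [norm_div, norm_div, Real.norm_eq_abs, Real.norm_eq_abs, Real.norm_eq_abs, abs_of_pos Real.pi_pos,
    abs_of_pos (show 0 < Real.exp (2 * π * t) - 1 by linarith), div_div, div_le_iff₀ (by
      apply mul_pos Real.pi_pos; linarith)]
  have d : t * (π * (2 * π * t)) ≤ t * (π * (Real.exp (2 * π * t) - 1)) := by gcongr; linarith
  have e : π * t ^ 2 ≤ t * (π * (2 * π * t)) := by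
    have : 0 < π * t ^ 2 := by positivity
    nlinarith
  linarith

lemma ibp_limtop : Filter.Tendsto (fun t : ℝ => Real.sin (π * t ^ 2) / π / (Real.exp (2 * π * t) - 1))
    Filter.atTop (nhds 0) := by
  have hpi := Real.pi_gt_three
  refine squeeze_zero_norm' ?_ (tendsto_inv_atTop_zero (𝕜 := ℝ))
  filter_upwards [Filter.eventually_gt_atTop 0] with t h
  have a := Real.add_one_le_exp (2 * π * t)
  have b := Real.abs_sin_le_one (π * t ^ 2)
  have c : 0 < 2 * π * t := by positivity
  rw [norm_div, norm_div, Real.norm_eq_abs, Real.norm_eq_abs, Real.norm_eq_abs, abs_of_pos Real.pi_pos,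
    abs_of_pos (show 0 < Real.exp (2 * π * t) - 1 by linarith), div_div, ← one_div]
  gcongr
  have : t ≤ 2 * π * t := by nlinarith
  nlinarith

/-- Ramanujan's integral `R_C(0, 1)` converges and equals `(2 - √2)/8`. -/
theorem ramanujan_RC_zero_one :
    IntegrableOn
      (fun x : ℝ => Real.cos (π * x) / (Real.exp (2 * π * Real.sqrt x) - 1)) (Ioi 0) ∧
    (∫ x in Ioi (0:ℝ), Real.cos (π * x) / (Real.exp (2 * π * Real.sqrt x) - 1)) =
      (2 - Real.sqrt 2) / 8 := by
  refine ⟨f_integrable, ?_⟩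
  have hsub : ∀ t ∈ Ioi (0:ℝ), (2 * t ^ ((2:ℝ) - 1)) • (Real.cos (π * (t ^ (2:ℝ))) /
      (Real.exp (2 * π * Real.sqrt (t ^ (2:ℝ))) - 1)) =
      2 * t * (Real.cos (π * t ^ 2) / (Real.exp (2 * π * t) - 1)) := by
    intro t ht
    have ht0 : (0:ℝ) < t := ht
    rw [Real.rpow_two, Real.sqrt_sq ht0.le, smul_eq_mul]
    norm_num
  have hint := (integrableOn_Ioi_comp_rpow_iff (fun x : ℝ => Real.cos (π * x) /
    (Real.exp (2 * π * Real.sqrt x) - 1)) (p := 2) two_ne_zero).2 f_integrable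
  rw [abs_two, integrableOn_congr_fun hsub measurableSet_Ioi] at hint
  have hval := integral_comp_rpow_Ioi_of_pos (g := fun x : ℝ => Real.cos (π * x) /
    (Real.exp (2 * π * Real.sqrt x) - 1)) (p := 2) two_pos
  rw [setIntegral_congr_fun measurableSet_Ioi hsub] at hval
  rw [← hval]
  have hs : IntegrableOn (fun t : ℝ => 1 / 2 * (Real.sin (π * t ^ 2) / Real.sinh (π * t) ^ 2)) (Ioi 0) :=
    (s_integrable.const_mul (1/2)).integrableOn
  have := integral_Ioi_of_hasDerivAt_of_tendsto ibp_lim0 (fun t ht => ibp_deriv t ht)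
    (hint.sub hs) ibp_limtop
  rw [integral_sub hint hs, integral_const_mul, s_half] at this
  simp only [ne_eq, OfNat.ofNat_ne_zero, not_false_eq_true, zero_pow, mul_zero, Real.sin_zero,
    zero_div] at this
  linarith
end
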